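/- Let G be a finite connected simple graph on vertex set V with nonnegative edge weights w, let x̄ : V → {0,1} with nonempty facility set F = {k ∈ V : x̄(k) = 1}, let i ∈ V, and let M ∈ ℝ satisfy M ≥ min_{j ∈ F} d_w(k,j) for every k ∈ V. Then the optimal value of the dual formulation — the supremum of π(i) − π(t) − ∑_{k ∈ V} x̄(k)·μ(k) over pairs (π, μ) with π : V ∪ {t} → ℝ, μ : V → ℝ, μ ≥ 0, π(k) ≤ π(l) + w({k,l}) and π(l) ≤ π(k) + w({k,l}) for every edge {k,l}, and π(k) ≤ π(t) + μ(k) for every k ∈ V — equals the optimal value of the formulation SP^i, namely the supremum of π(i) over nonnegative π : V → ℝ satisfying π(k) ≤ π(l) + w({k,l}) and π(l) ≤ π(k) + w({k,l}) for every edge {k,l} and π(k) ≤ M·(1 − x̄(k)) for all k. -/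

import Mathlib

open SimpleGraph

/-- The weighted distance between `i` and `j`: the infimum (`sInf` in `ℝ`) of the
weighted lengths of all walks from `i` to `j`. -/
noncomputable def gdist {V : Type*} (G : SimpleGraph V) (w : Sym2 V → ℝ) (i j : V) : ℝ :=
  sInf {L : ℝ | ∃ p : G.Walk i j, (p.edges.map w).sum = L}

theorem pot_walk {V : Type*} (G : SimpleGraph V) (w : Sym2 V → ℝ) (π : V → ℝ)
    (h : ∀ k l, G.Adj k l → π k ≤ π l + w s(k, l)) {i j : V} (p : G.Walk i j) :
    π i ≤ π j + (p.edges.map w).sum := by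
  induction p with
  | nil => simp
  | cons hadj p ih =>
    have := h _ _ hadj
    simp only [SimpleGraph.Walk.edges_cons, List.map_cons, List.sum_cons]
    linarith

theorem pot_gdist {V : Type*} (G : SimpleGraph V) (hG : G.Connected) (w : Sym2 V → ℝ) (π : V → ℝ)
    (h : ∀ k l, G.Adj k l → π k ≤ π l + w s(k, l)) (i j : V) :
    π i ≤ π j + gdist G w i j := by
  have : π i - π j ≤ gdist G w i j := by
    unfold gdist
    apply le_csInf
    · obtain ⟨p⟩ := hG.preconnected i j
      exact ⟨_, p, rfl⟩
    · rintro _ ⟨p, rfl⟩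
      linarith [pot_walk G w π h p]
  linarith

theorem gdist_nn {V : Type*} (G : SimpleGraph V) (hG : G.Connected) (w : Sym2 V → ℝ)
    (hw : ∀ e ∈ G.edgeSet, 0 ≤ w e) (i j : V) : 0 ≤ gdist G w i j := by
  have := pot_gdist G hG w (fun _ => 0) (fun k l hkl => by
    have := hw s(k, l) hkl
    simpa using this) i j
  simpa using this

theorem gdist_le_walk {V : Type*} (G : SimpleGraph V) (w : Sym2 V → ℝ)
    (hw : ∀ e ∈ G.edgeSet, 0 ≤ w e) {i j : V} (p : G.Walk i j) :
    gdist G w i j ≤ (p.edges.map w).sum := by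
  unfold gdist
  refine csInf_le ⟨0, ?_⟩ ⟨p, rfl⟩
  rintro _ ⟨q, rfl⟩
  apply List.sum_nonneg
  intro a ha
  obtain ⟨e, he, rfl⟩ := List.mem_map.1 ha
  exact hw e (q.edges_subset_edgeSet he)

theorem gdist_step {V : Type*} (G : SimpleGraph V) (hG : G.Connected) (w : Sym2 V → ℝ)
    (hw : ∀ e ∈ G.edgeSet, 0 ≤ w e) (k l j : V) (hkl : G.Adj k l) :
    gdist G w k j ≤ gdist G w l j + w s(k, l) := by
  have : gdist G w k j - w s(k, l) ≤ gdist G w l j := by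
    conv_rhs => unfold gdist
    apply le_csInf
    · obtain ⟨p⟩ := hG.preconnected l j
      exact ⟨_, p, rfl⟩
    · rintro _ ⟨p, rfl⟩
      have := gdist_le_walk G w hw (SimpleGraph.Walk.cons hkl p)
      simp only [SimpleGraph.Walk.edges_cons, List.map_cons, List.sum_cons] at this
      linarith
  linarith

/-- The optimal value of the dual formulation (with auxiliary sink variable `πt` and
multipliers `μ`) equals the optimal value of the formulation `SP^i` with big-M
constraints, provided `M ≥ min_{j ∈ F} d_w(k,j)` for every vertex `k`. -/
theorem stmt11 {V : Type*} [Fintype V] (G : SimpleGraph V) (hG : G.Connected)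
    (w : Sym2 V → ℝ) (hw : ∀ e ∈ G.edgeSet, 0 ≤ w e)
    (x : V → ℝ) (hx01 : ∀ k, x k = 0 ∨ x k = 1)
    (F : Finset V) (hFx : ∀ k, k ∈ F ↔ x k = 1) (hF : F.Nonempty)
    (i : V) (M : ℝ) (hM : ∀ k, F.inf' hF (fun j => gdist G w k j) ≤ M) :
    sSup {y : ℝ | ∃ π : V → ℝ, ∃ πt : ℝ, ∃ μ : V → ℝ,
        (∀ k, 0 ≤ μ k) ∧ (∀ k l, G.Adj k l → π k ≤ π l + w s(k, l)) ∧
        (∀ k, π k ≤ πt + μ k) ∧ y = π i - πt - ∑ k : V, x k * μ k} =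
      sSup {y : ℝ | ∃ π : V → ℝ, (∀ k, 0 ≤ π k) ∧
        (∀ k l, G.Adj k l → π k ≤ π l + w s(k, l)) ∧
        (∀ k, π k ≤ M * (1 - x k)) ∧ π i = y} := by
  set D : V → ℝ := fun k => F.inf' hF (fun j => gdist G w k j) with hD
  have D0 : ∀ k, 0 ≤ D k := fun k => Finset.le_inf' _ _ fun j _ => gdist_nn G hG w hw k j
  have Dle : ∀ k j, j ∈ F → D k ≤ gdist G w k j := fun k j hj => Finset.inf'_le _ hj
  have DF : ∀ k, x k = 1 → D k = 0 := by
    intro k hk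
    refine le_antisymm ((Dle k k ((hFx k).2 hk)).trans ?_) (D0 k)
    simpa using gdist_le_walk G w hw (SimpleGraph.Walk.nil : G.Walk k k)
  have Dstep : ∀ k l, G.Adj k l → D k ≤ D l + w s(k, l) := by
    intro k l hkl
    obtain ⟨j, hj, hjl⟩ := Finset.exists_mem_eq_inf' hF (fun j => gdist G w l j)
    have h1 := Dle k j hj
    have h2 := gdist_step G hG w hw k l j hkl
    have h3 : D l = gdist G w l j := hjl
    linarith
  obtain ⟨j, hj, hji⟩ := Finset.exists_mem_eq_inf' hF (fun j => gdist G w i j)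
  have hDi : D i = gdist G w i j := hji
  have hxj := (hFx j).1 hj
  trans D i
  · apply IsGreatest.csSup_eq
    constructor
    · refine ⟨D, 0, D, D0, Dstep, fun k => by simp, ?_⟩
      rw [Finset.sum_eq_zero]
      · simp
      · intro k _
        rcases hx01 k with h | h
        · simp [h]
        · simp [DF k h]
    · rintro y ⟨π, πt, μ, hμ, hπ, ht, rfl⟩
      have h1 := pot_gdist G hG w π hπ i j
      have h2 : x j * μ j ≤ ∑ k : V, x k * μ k :=
        Finset.single_le_sum (f := fun k => x k * μ k) (fun k _ => by
          rcases hx01 k with h | h <;> simp [h, hμ k]) (Finset.mem_univ j)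
      rw [hxj, one_mul] at h2
      linarith [ht j]
  · symm
    apply IsGreatest.csSup_eq
    constructor
    · refine ⟨D, D0, Dstep, fun k => ?_, rfl⟩
      rcases hx01 k with h | h
      · rw [h, sub_zero, mul_one]
        exact hM k
      · simp [h, DF k h]
    · rintro y ⟨π, h0, hπ, hb, rfl⟩
      have h1 := pot_gdist G hG w π hπ i j
      have h2 := hb j
      rw [hxj] at h2
      linarith
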